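/- arXiv:0809.0159 — 5 statements merged into one kernel-verified Lean document; each statement's English description precedes it below -/
import Mathlib

section
/- Let f : ℝ → ℝ be a terrain and let a < b < c < d be four real numbers. If a sees c and b sees d, then a sees d. -/
/-!
Let `L` be the affine function agreeing with `f` at `a` and `d`, and put `g = f - L`, so that
`g a = g d = 0`. Visibility is unaffected by subtracting an affine function, so
`g b ≤ p * g c` (as `a` sees `c`) and `g c ≤ q * g b` (as `b` sees `d`) with `p, q ∈ (0, 1)`.
Hence `g b ≤ 0` and `g c ≤ 0`. On `[a, c]` the function `g` lies below the chord from `0` to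
`g c`, and on `[b, d]` below the chord from `g b` to `0`; these intervals cover `[a, d]`,
so `g ≤ 0` there, which says that `a` sees `d`.
-/

/-- `a` sees `b` on the terrain `f`: the straight segment joining `(a, f a)` and
`(b, f b)` never goes strictly below the graph of `f`. -/
def Sees (f : ℝ → ℝ) (a b : ℝ) : Prop :=
  ∀ t ∈ Set.Icc (0:ℝ) 1, f ((1 - t) * a + t * b) ≤ (1 - t) * f a + t * f b

/-- Division-free form of visibility, parametrised by the point `x` instead of by `t`. -/
lemma Sees.chord {f : ℝ → ℝ} {a c : ℝ} (h : Sees f a c) (hac : a < c) {x : ℝ}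
    (hax : a ≤ x) (hxc : x ≤ c) : (c - a) * f x ≤ (c - x) * f a + (x - a) * f c := by
  have hpos : 0 < c - a := sub_pos.2 hac
  have key := h ((x - a) / (c - a))
    ⟨div_nonneg (sub_nonneg.2 hax) hpos.le, (div_le_one hpos).2 (by linarith)⟩
  have hx : (1 - (x - a) / (c - a)) * a + (x - a) / (c - a) * c = x := by
    field_simp
    ring
  rw [hx] at key
  calc (c - a) * f x
      ≤ (c - a) * ((1 - (x - a) / (c - a)) * f a + (x - a) / (c - a) * f c) :=
        mul_le_mul_of_nonneg_left key hpos.le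
    _ = (c - x) * f a + (x - a) * f c := by
        field_simp
        ring

theorem order_claim (f : ℝ → ℝ) (a b c d : ℝ)
    (hab : a < b) (hbc : b < c) (hcd : c < d)
    (hac : Sees f a c) (hbd : Sees f b d) : Sees f a d := by
  rintro t ⟨ht0, ht1⟩
  -- `m` is the slope of the line through `(a, f a)` and `(d, f d)`.
  obtain ⟨m, hm⟩ : ∃ m, f d = f a + m * (d - a) :=
    ⟨(f d - f a) / (d - a), by
      have : d - a ≠ 0 := by linarith
      field_simp
      ring⟩
  obtain ⟨g, hg⟩ : ∃ g : ℝ → ℝ, ∀ x, f x = g x + (f a + m * (x - a)) :=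
    ⟨fun x => f x - (f a + m * (x - a)), fun x => by ring⟩
  have hleft : ∀ x, a ≤ x → x ≤ c → (c - a) * g x ≤ (x - a) * g c := by
    intro x hax hxc
    have h := hac.chord (by linarith) hax hxc
    rw [hg x, hg c] at h
    linarith
  have hright : ∀ x, b ≤ x → x ≤ d → (d - b) * g x ≤ (d - x) * g b := by
    intro x hbx hxd
    have h := hbd.chord (by linarith) hbx hxd
    rw [hg x, hg b, hm] at h
    linarith
  have hb := hleft b hab.le hbc.le
  have hc := hright c hbc.le hcd.le
  -- If `g c > 0`, the first bound gives `g b < g c`, and the second `g c < g b`.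
  have hgc : g c ≤ 0 := by
    by_contra! hpos
    have h1 : g b < g c := by
      by_contra! hle
      nlinarith
    nlinarith
  have hgb : g b ≤ 0 := by nlinarith
  obtain ⟨x, hx⟩ : ∃ x, x = (1 - t) * a + t * d := ⟨_, rfl⟩
  have hax : a ≤ x := by nlinarith
  have hxd : x ≤ d := by nlinarith
  have hgx : g x ≤ 0 := by
    rcases le_total x c with hxc | hcx
    · have := hleft x hax hxc
      nlinarith
    · have := hright x (by linarith) hxd
      nlinarith
  rw [← hx, hg x, hm]
  have hxa : x - a = t * (d - a) := by rw [hx]; ring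
  rw [hxa]
  linarith
end

section
/- Let f : ℝ → ℝ be a terrain, let p : Fin m → ℝ be strictly increasing (the points ordered left to right) and let g : Fin n → ℝ be strictly decreasing (the guards ordered right to left). Define the 0–1 matrix M by M i j = 1 if g j < p i and g j sees p i, and M i j = 0 otherwise. Then M is in standard greedy form: there are no indices i₁ < i₂ and j₁ < j₂ with M i₁ j₁ = 1, M i₁ j₂ = 1, M i₂ j₁ = 1 and M i₂ j₂ = 0. -/
/-! With `a < b` the guards and `c < d` the points, the key fact is the order claim: if
`a < b < c < d`, `a` sees `c` and `b` sees `d`, then `a` sees `d`. Subtract from `f` the affine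
function through `(a, f a)` and `(d, f d)`; visibility is unaffected, and the resulting `F` vanishes
at `a` and `d`. Visibility then gives `F b ≤ r * F c` and `F c ≤ s * F b` with `r, s ∈ (0, 1)`, which
forces `F b ≤ 0` and `F c ≤ 0`. Since `[a, d] = [a, c] ∪ [b, d]`, the two chords bound `F` by `0`
on all of `[a, d]`. -/

open scoped Classical

/-- Visibility in denominator-free form, parametrized by the abscissa `x` rather than by `t`. -/
lemma sees_iff_chord (f : ℝ → ℝ) {u v : ℝ} (huv : u < v) :
    Sees f u v ↔
      ∀ x, u ≤ x → x ≤ v → (v - u) * f x ≤ (v - x) * f u + (x - u) * f v := by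
  have hpos : 0 < v - u := sub_pos.mpr huv
  constructor
  · intro h x hux hxv
    have key := h ((x - u) / (v - u))
      ⟨div_nonneg (by linarith) hpos.le, (div_le_one hpos).mpr (by linarith)⟩
    have hx : (1 - (x - u) / (v - u)) * u + (x - u) / (v - u) * v = x := by
      field_simp
      ring
    rw [hx] at key
    calc (v - u) * f x
        ≤ (v - u) * ((1 - (x - u) / (v - u)) * f u + (x - u) / (v - u) * f v) :=
          mul_le_mul_of_nonneg_left key hpos.le
      _ = (v - x) * f u + (x - u) * f v := by
          field_simp
          ring
  · rintro h t ⟨ht0, ht1⟩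
    have key := h ((1 - t) * u + t * v) (by nlinarith) (by nlinarith)
    refine le_of_mul_le_mul_left (key.trans_eq ?_) hpos
    ring

/-- The order claim for terrains. -/
lemma sees_of_crossing (f : ℝ → ℝ) {a b c d : ℝ} (hab : a < b) (hbc : b < c) (hcd : c < d)
    (hac : Sees f a c) (hbd : Sees f b d) : Sees f a d := by
  rw [sees_iff_chord f (by linarith)] at hac hbd ⊢
  obtain ⟨s, hs⟩ : ∃ s, f d = f a + s * (d - a) :=
    ⟨(f d - f a) / (d - a), by
      have : d - a ≠ 0 := by linarith
      field_simp
      ring⟩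
  obtain ⟨F, hF⟩ : ∃ F : ℝ → ℝ, ∀ x, f x = F x + (f a + s * (x - a)) :=
    ⟨fun x => f x - (f a + s * (x - a)), fun x => by ring⟩
  have hFac : ∀ x, a ≤ x → x ≤ c → (c - a) * F x ≤ (x - a) * F c := by
    intro x h₁ h₂
    have h := hac x h₁ h₂
    rw [hF x, hF c] at h
    linarith
  have hFbd : ∀ x, b ≤ x → x ≤ d → (d - b) * F x ≤ (d - x) * F b := by
    intro x h₁ h₂
    have h := hbd x h₁ h₂
    rw [hF x, hF b, hs] at h
    linarith
  have hb := hFac b hab.le hbc.le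
  have hc := hFbd c hbc.le hcd.le
  have hFc : F c ≤ 0 := by
    by_contra! hpos
    -- A positive `F c` forces `F b > F c` along `bd`, and then `F c > F b` along `ac`.
    have hFb : 0 < F b := by
      by_contra! hneg
      nlinarith
    have hlt : F c < F b := by
      by_contra! hle
      nlinarith
    nlinarith
  have hFb : F b ≤ 0 := by
    by_contra! hpos
    nlinarith
  intro x hax hxd
  have hFx : F x ≤ 0 := by
    by_contra! hpos
    rcases le_total x c with hxc | hcx
    · nlinarith [hFac x hax hxc]
    · nlinarith [hFbd x (by linarith) hxd]
  rw [hF x, hs]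
  nlinarith

/-- Ordering points left to right and guards right to left puts the
left-visibility matrix in standard greedy form. -/
theorem left_visibility_standard_greedy_form (f : ℝ → ℝ) {m n : ℕ}
    (p : Fin m → ℝ) (g : Fin n → ℝ)
    (hp : StrictMono p) (hg : StrictAnti g)
    (M : Fin m → Fin n → ℕ)
    (hM : ∀ i j, M i j = if g j < p i ∧ Sees f (g j) (p i) then 1 else 0) :
    ∀ i₁ i₂ j₁ j₂, i₁ < i₂ → j₁ < j₂ →
      ¬ (M i₁ j₁ = 1 ∧ M i₁ j₂ = 1 ∧ M i₂ j₁ = 1 ∧ M i₂ j₂ = 0) := by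
  rintro i₁ i₂ j₁ j₂ hi hj ⟨h₁₁, h₁₂, h₂₁, h₂₂⟩
  have hone : ∀ i j, M i j = 1 → g j < p i ∧ Sees f (g j) (p i) := by
    intro i j h
    by_contra hn
    rw [hM, if_neg hn] at h
    exact zero_ne_one h
  have hlt := (hone _ _ h₁₁).1
  have hsees : Sees f (g j₂) (p i₂) :=
    sees_of_crossing f (hg hj) hlt (hp hi) (hone _ _ h₁₂).2 (hone _ _ h₂₁).2
  rw [hM, if_pos ⟨(hg hj).trans (hlt.trans (hp hi)), hsees⟩] at h₂₂
  exact one_ne_zero h₂₂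
end

section
/- Let f : ℝ → ℝ be a terrain, G ⊆ ℝ a finite set of guards and N ⊆ ℝ a finite set of points such that every p ∈ N is seen from the left by some guard in G; for p ∈ N let L(p) denote the leftmost guard of G that sees p from the left. Let X ⊆ N be such that for all p, q ∈ X with p < q, L(p) does not see q. Then no guard g ∈ G sees two distinct points of X from the left; consequently, every set A ⊆ G such that each point of X is seen from the left by some guard of A satisfies |A| ≥ |X|. -/
/-- A guard `g` sees a point `p` from the left. -/
def SeesLeft (f : ℝ → ℝ) (g p : ℝ) : Prop := g < p ∧ Sees f g p

/-- Visibility between `a < b` with the parameter `t` eliminated and denominators cleared. -/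
lemma sees_iff_of_lt {f : ℝ → ℝ} {a b : ℝ} (hab : a < b) :
    Sees f a b ↔ ∀ x ∈ Set.Icc a b, (b - a) * f x ≤ (b - x) * f a + (x - a) * f b := by
  have hba : 0 < b - a := sub_pos.2 hab
  constructor
  · rintro h x ⟨hax, hxb⟩
    have ht := h ((x - a) / (b - a))
      ⟨div_nonneg (by linarith) hba.le, (div_le_one hba).2 (by linarith)⟩
    have hx : (1 - (x - a) / (b - a)) * a + (x - a) / (b - a) * b = x := by
      field_simp
      ring
    rw [hx] at ht
    calc (b - a) * f x
        ≤ (b - a) * ((1 - (x - a) / (b - a)) * f a + (x - a) / (b - a) * f b) :=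
          mul_le_mul_of_nonneg_left ht hba.le
      _ = (b - x) * f a + (x - a) * f b := by
          field_simp
          ring
  · rintro h t ⟨ht0, ht1⟩
    have hx := h ((1 - t) * a + t * b) ⟨by nlinarith, by nlinarith⟩
    refine le_of_mul_le_mul_left (hx.trans_eq ?_) hba
    ring

/-- The order claim: if the lines of sight `l`–`p` and `g`–`q` cross, with `l < g < p < q`, then
`l` sees `q`. -/
lemma Sees.order_claim {f : ℝ → ℝ} {l g p q : ℝ} (hlg : l < g) (hgp : g < p) (hpq : p < q)
    (hlp : Sees f l p) (hgq : Sees f g q) : Sees f l q := by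
  have hlq : 0 ≤ q - l := by linarith
  rw [sees_iff_of_lt (by linarith)] at hlp hgq ⊢
  -- Height above the chord from `l` to `q`, scaled by `q - l`; it vanishes at `l` and at `q`.
  obtain ⟨h, hh⟩ : ∃ h : ℝ → ℝ, ∀ x, h x = (q - l) * f x - (q - x) * f l - (x - l) * f q :=
    ⟨_, fun _ => rfl⟩
  have h1 : ∀ x ∈ Set.Icc l p, (p - l) * h x ≤ (x - l) * h p := by
    intro x hx
    have := mul_le_mul_of_nonneg_left (hlp x hx) hlq
    rw [hh, hh]
    linarith
  have h2 : ∀ x ∈ Set.Icc g q, (q - g) * h x ≤ (q - x) * h g := by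
    intro x hx
    have := mul_le_mul_of_nonneg_left (hgq x hx) hlq
    rw [hh, hh]
    linarith
  have hg := h1 g ⟨hlg.le, hgp.le⟩
  have hp := h2 p ⟨hgp.le, hpq.le⟩
  have hp0 : h p ≤ 0 := by
    by_contra! hpos
    have hgpos : 0 < h g := by
      by_contra! hneg
      nlinarith
    -- The two lines of sight now give both `h p < h g` and `h g < h p`.
    rcases le_total (h g) (h p) with hle | hle <;> nlinarith
  have hg0 : h g ≤ 0 := by
    by_contra! hpos
    nlinarith
  rintro x ⟨hlx, hxq⟩
  have hx0 : h x ≤ 0 := by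
    by_contra! hpos
    rcases le_total x p with hxp | hpx
    · nlinarith [h1 x ⟨hlx, hxp⟩]
    · nlinarith [h2 x ⟨by linarith, hxq⟩]
  rw [hh] at hx0
  linarith

/-- Every guard sees at most one point of the witness set `X` from the left, hence
any left-guarding set for `X` has cardinality at least `|X|`. -/
theorem greedy_witness_lower_bound (f : ℝ → ℝ) (G N : Finset ℝ)
    (hcov : ∀ p ∈ N, ∃ g ∈ G, SeesLeft f g p)
    (L : ℝ → ℝ)
    (hL : ∀ p ∈ N, L p ∈ G ∧ SeesLeft f (L p) p ∧ ∀ g ∈ G, SeesLeft f g p → L p ≤ g)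
    (X : Finset ℝ) (hXN : X ⊆ N)
    (hX : ∀ p ∈ X, ∀ q ∈ X, p < q → ¬ Sees f (L p) q) :
    (∀ g ∈ G, ∀ p ∈ X, ∀ q ∈ X, p ≠ q →
        ¬ (SeesLeft f g p ∧ SeesLeft f g q)) ∧
    (∀ A ⊆ G, (∀ p ∈ X, ∃ g ∈ A, SeesLeft f g p) → X.card ≤ A.card) := by
  have key : ∀ g ∈ G, ∀ p ∈ X, ∀ q ∈ X, p < q → SeesLeft f g p → ¬ SeesLeft f g q := by
    intro g hg p hp q hq hpq hgp hgq
    obtain ⟨-, hLp, hmin⟩ := hL p (hXN hp)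
    refine hX p hp q hq hpq ?_
    rcases (hmin g hg hgp).eq_or_lt with heq | hlt
    · rw [heq]
      exact hgq.2
    · exact Sees.order_claim hlt hgp.1 hpq hLp.2 hgq.2
  have huniq : ∀ g ∈ G, ∀ p ∈ X, ∀ q ∈ X, p ≠ q → ¬ (SeesLeft f g p ∧ SeesLeft f g q) := by
    rintro g hg p hp q hq hne ⟨hgp, hgq⟩
    rcases hne.lt_or_gt with hlt | hlt
    · exact key g hg p hp q hq hlt hgp hgq
    · exact key g hg q hq p hp hlt hgq hgp
  refine ⟨huniq, fun A hAG hA => ?_⟩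
  choose! w hwA hw using hA
  refine Finset.card_le_card_of_injOn w hwA fun p hp q hq hpq => ?_
  by_contra hne
  exact huniq (w p) (hAG (hwA p hp)) p hp q hq hne ⟨hw p hp, hpq ▸ hw q hq⟩
end

section
/- The linear programming relaxation of the left-guarding problem is integral: let f : ℝ → ℝ be a terrain, G ⊆ ℝ a finite set of guards with nonnegative weights w : G → ℝ, N ⊆ ℝ a finite set of points, and let x : G → ℝ satisfy x(g) ≥ 0 for all g ∈ G and, for every p ∈ N, Σ_{g ∈ G, g < p, g sees p} x(g) ≥ 1. Then there exists A ⊆ G such that every p ∈ N is seen from the left by some guard in A and Σ_{g ∈ A} w(g) ≤ Σ_{g ∈ G} w(g)·x(g). -/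
/-!
The proof is a local-ratio argument resting on the order claim for terrains (`Sees.order`):
if `a < b < c < d`, `a` sees `c` and `b` sees `d`, then `a` sees `d`. Consequently, among the
guards that see a given point `p` from the left, a guard further left sees every point right
of `p` that a guard further right sees.

Induct on the set of points by splitting off its leftmost point `p`, for all weights at once.
Let `ε` be the minimum weight of a guard seeing `p`, attained at `g₀`, and lower the weight of
every guard seeing `p` by `ε`. Since `x` covers `p`, the fractional cost drops by at least `ε`.
Take a cover `B` of the remaining points for the lowered weights. If `B` contains guards seeing
`p`, keep only the leftmost of them, which by the order claim replaces all the others; if not,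
add `g₀`, whose lowered weight is zero. Either way exactly one chosen guard sees `p`, so
restoring the weights raises the cost of the cover by exactly `ε`.
-/

open scoped Classical

lemma Sees.le_of_mem {f : ℝ → ℝ} {a b z : ℝ} (h : Sees f a b) (hab : a < b)
    (haz : a ≤ z) (hzb : z ≤ b) :
    f z ≤ (1 - (z - a) / (b - a)) * f a + (z - a) / (b - a) * f b := by
  have hd : 0 < b - a := sub_pos.2 hab
  have h1 := h ((z - a) / (b - a))
    ⟨div_nonneg (by linarith) hd.le, (div_le_one hd).2 (by linarith)⟩
  have h2 : (1 - (z - a) / (b - a)) * a + (z - a) / (b - a) * b = z := by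
    field_simp
    ring
  rwa [h2] at h1

/-- Visibility is unaffected by subtracting an affine function from the terrain. -/
lemma Sees.sub_affine {f : ℝ → ℝ} {a b : ℝ} (h : Sees f a b) (m k : ℝ) :
    Sees (fun z => f z - (m * z + k)) a b := by
  intro t ht
  have := h t ht
  simp only
  linarith

/-- The order claim in the normalized case where both outer points have height zero. -/
lemma Sees.order_aux {F : ℝ → ℝ} {a b c d : ℝ} (hab : a < b) (hbc : b < c) (hcd : c < d)
    (hac : Sees F a c) (hbd : Sees F b d) (ha : F a = 0) (hd : F d = 0)
    {z : ℝ} (haz : a ≤ z) (hzd : z ≤ d) : F z ≤ 0 := by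
  have hb := hac.le_of_mem (hab.trans hbc) hab.le hbc.le
  have hc := hbd.le_of_mem (hbc.trans hcd) hbc.le hcd.le
  rw [ha, mul_zero, zero_add] at hb
  rw [hd, mul_zero, add_zero] at hc
  have l0 : 0 < (b - a) / (c - a) := div_pos (by linarith) (by linarith)
  have l1 : (b - a) / (c - a) < 1 := (div_lt_one (by linarith)).2 (by linarith)
  have m0 : 0 < (c - b) / (d - b) := div_pos (by linarith) (by linarith)
  have m1 : (c - b) / (d - b) < 1 := (div_lt_one (by linarith)).2 (by linarith)
  generalize (b - a) / (c - a) = l at *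
  generalize (c - b) / (d - b) = m at *
  -- `F b ≤ l * F c` and `F c ≤ (1 - m) * F b` with factors in `(0, 1)`
  have hb0 : F b ≤ 0 := by
    by_contra! hpos
    have h1 : (1 - m) * F b < F b := by nlinarith
    nlinarith [mul_pos l0 hpos]
  have hc0 : F c ≤ 0 := by nlinarith
  rcases le_total z c with hzc | hzc
  · have := hac.le_of_mem (hab.trans hbc) haz hzc
    have h0 : 0 ≤ (z - a) / (c - a) := div_nonneg (by linarith) (by linarith)
    rw [ha] at this
    nlinarith
  · have := hbd.le_of_mem (hbc.trans hcd) (by linarith) hzd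
    have h0 : (z - b) / (d - b) ≤ 1 := (div_le_one (by linarith)).2 (by linarith)
    rw [hd] at this
    nlinarith

/-- The order claim for terrains. -/
lemma Sees.order {f : ℝ → ℝ} {a b c d : ℝ} (hab : a < b) (hbc : b < c) (hcd : c < d)
    (hac : Sees f a c) (hbd : Sees f b d) : Sees f a d := by
  intro t ht
  have had : 0 < d - a := by linarith
  -- subtract the line through `(a, f a)` and `(d, f d)`
  obtain ⟨m, hm⟩ : ∃ m, m * (d - a) = f d - f a :=
    ⟨(f d - f a) / (d - a), by field_simp⟩
  have h := Sees.order_aux hab hbc hcd (hac.sub_affine m (f a - m * a))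
    (hbd.sub_affine m (f a - m * a)) (by ring) (by linarith)
    (z := (1 - t) * a + t * d) (by nlinarith [ht.1]) (by nlinarith [ht.2])
  linear_combination h + t * hm

/-- Integrality for an abstract visibility relation `R` satisfying the consequence `hR` of the
order claim. -/
lemma exists_cover_of_nested (R : ℝ → ℝ → Prop)
    (hR : ∀ a b p q, a < b → p < q → R a p → R b p → R b q → R a q)
    (G N : Finset ℝ) (x : ℝ → ℝ) (hx : ∀ g ∈ G, 0 ≤ x g) :
    (∀ p ∈ N, 1 ≤ ∑ g ∈ G, if R g p then x g else 0) →
    ∀ w : ℝ → ℝ, (∀ g ∈ G, 0 ≤ w g) →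
    ∃ A ⊆ G, (∀ p ∈ N, ∃ g ∈ A, R g p) ∧ ∑ g ∈ A, w g ≤ ∑ g ∈ G, w g * x g := by
  induction N using Finset.induction_on_min with
  | empty =>
    intro _ w hw
    exact ⟨∅, by simp, by simp, by
      simpa using Finset.sum_nonneg fun g hg => mul_nonneg (hw g hg) (hx g hg)⟩
  | insert p N hp ih =>
    intro hcov w hw
    have hpcov := hcov p (by simp)
    have hne : (G.filter (R · p)).Nonempty := by
      by_contra hemp
      rw [Finset.not_nonempty_iff_eq_empty] at hemp
      rw [← Finset.sum_filter, hemp, Finset.sum_empty] at hpcov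
      linarith
    obtain ⟨g₀, hg₀, hmin⟩ := Finset.exists_min_image _ w hne
    rw [Finset.mem_filter] at hg₀
    obtain ⟨B, hBG, hBcov, hBw⟩ := ih (fun q hq => hcov q (by simp [hq]))
      (fun g => w g - if R g p then w g₀ else 0) (by
        intro g hg
        by_cases h : R g p
        · simpa [h] using hmin g (by simp [hg, h])
        · simpa [h] using hw g hg)
    have hfrac : ∑ g ∈ G, (w g - if R g p then w g₀ else 0) * x g + w g₀
        ≤ ∑ g ∈ G, w g * x g := by
      have e : ∑ g ∈ G, (w g - if R g p then w g₀ else 0) * x g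
          = ∑ g ∈ G, w g * x g - w g₀ * ∑ g ∈ G, if R g p then x g else 0 := by
        rw [Finset.mul_sum, ← Finset.sum_sub_distrib]
        refine Finset.sum_congr rfl fun g _ => ?_
        split_ifs <;> ring
      rw [e]
      nlinarith [hw g₀ hg₀.1]
    by_cases hB : (B.filter (R · p)).Nonempty
    · obtain ⟨l, hl, hlmin⟩ := Finset.exists_min_image _ id hB
      rw [Finset.mem_filter] at hl
      have hlC : l ∉ B.filter (fun g => ¬ R g p) := by simp [hl.2]
      refine ⟨insert l (B.filter fun g => ¬ R g p), ?_, ?_, ?_⟩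
      · intro g hg
        rcases Finset.mem_insert.1 hg with rfl | hg
        · exact hBG hl.1
        · exact hBG (Finset.mem_filter.1 hg).1
      · intro q hq
        rcases Finset.mem_insert.1 hq with rfl | hq
        · exact ⟨l, by simp, hl.2⟩
        · obtain ⟨g, hg, hgq⟩ := hBcov q hq
          by_cases h : R g p
          · refine ⟨l, by simp, ?_⟩
            rcases (hlmin g (by simp [hg, h])).eq_or_lt with e | e
            · simp only [id] at e
              rwa [e]
            · exact hR l g p q e (hp q hq) hl.2 h hgq
          · exact ⟨g, by simp [hg, h], hgq⟩
      · have hsub : ∑ g ∈ insert l (B.filter fun g => ¬ R g p),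
            (w g - if R g p then w g₀ else 0)
            ≤ ∑ g ∈ B, (w g - if R g p then w g₀ else 0) := by
          refine Finset.sum_le_sum_of_subset_of_nonneg ?_ ?_
          · intro g hg
            rcases Finset.mem_insert.1 hg with rfl | hg
            · exact hl.1
            · exact (Finset.mem_filter.1 hg).1
          · intro g hg _
            by_cases h : R g p
            · simpa [h] using hmin g (by simp [hBG hg, h])
            · simpa [h] using hw g (hBG hg)
        rw [Finset.sum_insert hlC, if_pos hl.2] at hsub
        have e : ∑ g ∈ B.filter (fun g => ¬ R g p), (w g - if R g p then w g₀ else 0)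
            = ∑ g ∈ B.filter (fun g => ¬ R g p), w g :=
          Finset.sum_congr rfl fun g hg => by simp [(Finset.mem_filter.1 hg).2]
        rw [Finset.sum_insert hlC]
        linarith
    · have hBn : ∀ g ∈ B, ¬ R g p := fun g hg h => hB ⟨g, by simp [hg, h]⟩
      have hg₀B : g₀ ∉ B := fun h => hBn _ h hg₀.2
      refine ⟨insert g₀ B, Finset.insert_subset hg₀.1 hBG, ?_, ?_⟩
      · intro q hq
        rcases Finset.mem_insert.1 hq with rfl | hq
        · exact ⟨g₀, by simp, hg₀.2⟩
        · obtain ⟨g, hg, hgq⟩ := hBcov q hq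
          exact ⟨g, by simp [hg], hgq⟩
      · have e : ∑ g ∈ B, (w g - if R g p then w g₀ else 0) = ∑ g ∈ B, w g :=
          Finset.sum_congr rfl fun g hg => by simp [hBn g hg]
        rw [Finset.sum_insert hg₀B]
        linarith

/-- The LP relaxation of the left-guarding problem is integral. -/
theorem left_guarding_LP_integral (f : ℝ → ℝ) (G N : Finset ℝ) (w x : ℝ → ℝ)
    (hw : ∀ g ∈ G, 0 ≤ w g) (hx : ∀ g ∈ G, 0 ≤ x g)
    (hcov : ∀ p ∈ N, 1 ≤ ∑ g ∈ G, if SeesLeft f g p then x g else 0) :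
    ∃ A ⊆ G, (∀ p ∈ N, ∃ g ∈ A, SeesLeft f g p) ∧
      ∑ g ∈ A, w g ≤ ∑ g ∈ G, w g * x g :=
  exists_cover_of_nested (SeesLeft f)
    (fun _ _ _ _ hab hpq hap hbp hbq =>
      ⟨hap.1.trans hpq, Sees.order hab hbp.1 hpq hap.2 hbq.2⟩)
    G N x hx hcov w hw
end

section
/- The integrality gap of the covering LP for discrete terrain guarding is at least 3/2: there exist a terrain f : ℝ → ℝ, a finite set of guards G ⊆ ℝ and a finite set of points N ⊆ ℝ with G ∩ N = ∅, and a nonnegative function x : G → ℝ with Σ_{g ∈ G, g sees p} x(g) ≥ 1 for every p ∈ N, such that some A ⊆ G sees every point of N, and every A ⊆ G with the property that each p ∈ N is seen by some g ∈ A satisfies |A| ≥ (3/2)·Σ_{g ∈ G} x(g). -/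
/-!
The witness is an honest instance with LP value `2` and integral optimum `3`: a continuous terrain
with four guards and six points such that every one of the six pairs of guards is exactly the set
of guards seeing one of the points. Fractionally, weight `1/2` on every guard covers all points at
total cost `2`. An integral solution is a vertex cover of the complete graph `K₄` on the guards,
so it uses at least three of them.

The terrain is the upper envelope of twelve tents of slope `23` with apexes `(i, height i)`,
`i = 0, …, 11`. The heights change by at most `23` per unit step, so the terrain passes through
every apex, and a sight line between two apexes clears the whole terrain as soon as it clears the
apexes in between (`sees_iff`). Visibility is thereby a finite condition on integers, and the
combinatorial facts about the instance are decided by computation.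
-/

open scoped Classical

namespace TerrainGap

/-- The heights of the apexes of the terrain; the apex number `i` has abscissa `i`. -/
def height : Fin 12 → ℤ := ![52, 38, 15, 16, 24, 16, 26, 13, 23, 40, 54, 57]

/-- The apex number as an abscissa. -/
def pos (i : Fin 12) : ℝ := ((i : ℕ) : ℝ)

/-- The upper envelope of the tents of slope `23` at the apexes. -/
noncomputable def terrain (y : ℝ) : ℝ :=
  Finset.univ.sup' Finset.univ_nonempty fun i : Fin 12 => (height i : ℝ) - 23 * |y - pos i|

/-- No apex strictly between `a` and `b` lies above the segment joining the apexes `a < b`. -/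
def Clear (a b : Fin 12) : Prop :=
  ∀ k : Fin 12, a < k → k < b →
    ((b : ℤ) - (a : ℤ)) * height k
      ≤ ((b : ℤ) - (k : ℤ)) * height a + ((k : ℤ) - (a : ℤ)) * height b

instance (a b : Fin 12) : Decidable (Clear a b) := by unfold Clear; infer_instance

lemma terrain_le_iff (y c : ℝ) :
    terrain y ≤ c ↔ ∀ i, (height i : ℝ) - 23 * |y - pos i| ≤ c := by
  simp [terrain]

lemma le_terrain (y : ℝ) (i : Fin 12) : (height i : ℝ) - 23 * |y - pos i| ≤ terrain y :=
  (terrain_le_iff y _).1 le_rfl i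

lemma height_lipschitz (i j : Fin 12) : |(height i : ℝ) - height j| ≤ 23 * |pos i - pos j| := by
  have h : ∀ i j : Fin 12, |height i - height j| ≤ 23 * |(i : ℤ) - (j : ℤ)| := by decide
  have := h i j
  unfold pos
  exact_mod_cast this

lemma terrain_pos (i : Fin 12) : terrain (pos i) = height i := by
  apply le_antisymm
  · rw [terrain_le_iff]
    intro j
    have := height_lipschitz j i
    rw [abs_sub_comm (pos j)] at this
    linarith [le_abs_self ((height j : ℝ) - height i)]
  · simpa using le_terrain (pos i) i

lemma pos_lt {a b : Fin 12} (h : a < b) : pos a < pos b := by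
  unfold pos
  exact_mod_cast h

lemma clear_real {a b k : Fin 12} :
    ((b : ℤ) - (a : ℤ)) * height k
      ≤ ((b : ℤ) - (k : ℤ)) * height a + ((k : ℤ) - (a : ℤ)) * height b ↔
    (pos b - pos a) * height k
      ≤ (pos b - pos k) * height a + (pos k - pos a) * (height b : ℝ) := by
  unfold pos
  exact_mod_cast Iff.rfl

lemma sees_symm {f : ℝ → ℝ} {a b : ℝ} (h : Sees f a b) : Sees f b a := by
  intro t ht
  have := h (1 - t) ⟨by linarith [ht.2], by linarith [ht.1]⟩
  ring_nf at this ⊢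
  linarith

/-- Since no sight line is steeper than the tents, only the apexes between the end points of a
sight line can obstruct it. -/
lemma sees_iff {a b : Fin 12} (hab : a < b) : Sees terrain (pos a) (pos b) ↔ Clear a b := by
  have hD := pos_lt hab
  have hd : 0 < pos b - pos a := by linarith
  constructor
  · intro h k hak hkb
    have h1 := pos_lt hak
    have h2 := pos_lt hkb
    rw [clear_real]
    have hk := h ((pos k - pos a) / (pos b - pos a))
      ⟨by apply div_nonneg <;> linarith, by rw [div_le_one hd]; linarith⟩
    have e : (1 - (pos k - pos a) / (pos b - pos a)) * pos a
        + (pos k - pos a) / (pos b - pos a) * pos b = pos k := by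
      field_simp
      ring
    rw [e, terrain_pos, terrain_pos, terrain_pos] at hk
    have := mul_le_mul_of_nonneg_left hk hd.le
    refine this.trans (le_of_eq ?_)
    field_simp
    ring
  · intro h t ht
    obtain ⟨h0, h1⟩ := ht
    rw [terrain_pos, terrain_pos, terrain_le_iff]
    intro i
    have hs := height_lipschitz b a
    rw [abs_of_pos hd, abs_le] at hs
    rcases le_or_gt i a with hi | hi
    · -- Left of the sight line: the tent lies below the line of slope `-23` through apex `a`.
      have hp : pos i ≤ pos a := by unfold pos; exact_mod_cast hi
      have hl := height_lipschitz i a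
      rw [abs_of_nonpos (a := pos i - pos a) (by linarith), abs_le] at hl
      have := le_abs_self ((1 - t) * pos a + t * pos b - pos i)
      nlinarith
    · rcases le_or_gt b i with hright | hright
      · -- Right of the sight line: the same with the line of slope `23` through apex `b`.
        have hp : pos b ≤ pos i := by unfold pos; exact_mod_cast hright
        have hl := height_lipschitz i b
        rw [abs_of_nonneg (a := pos i - pos b) (by linarith), abs_le] at hl
        have := neg_le_abs ((1 - t) * pos a + t * pos b - pos i)
        nlinarith
      · have hc := clear_real.1 (h i hi hright)
        -- Multiplied by `pos b - pos a`, the line drops by at most `23 * |y - pos i|` from its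
        -- value above apex `i`, which is at least `height i`.
        set u := (1 - t) * pos a + t * pos b - pos i with hu
        have key : -((pos b - pos a) * (23 * |u|)) ≤ ((height b : ℝ) - height a) * u := by
          have h3 : |((height b : ℝ) - height a) * u| ≤ 23 * (pos b - pos a) * |u| := by
            rw [abs_mul]
            exact mul_le_mul_of_nonneg_right (abs_le.2 ⟨by linarith, hs.2⟩) (abs_nonneg u)
          linarith [neg_abs_le (((height b : ℝ) - height a) * u)]
        refine le_of_mul_le_mul_left ?_ hd
        have e : (pos b - pos a) * ((1 - t) * height a + t * height b)
            = ((pos b - pos i) * height a + (pos i - pos a) * height b)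
              + ((height b : ℝ) - height a) * u := by
          rw [hu]
          ring
        rw [e, mul_sub]
        linarith

lemma sees_iff_clear {a b : Fin 12} (hab : a ≠ b) :
    Sees terrain (pos a) (pos b) ↔ Clear (min a b) (max a b) := by
  rcases lt_or_gt_of_ne hab with h | h
  · rw [min_eq_left h.le, max_eq_right h.le, sees_iff h]
  · rw [min_eq_right h.le, max_eq_left h.le, ← sees_iff h]
    exact ⟨sees_symm, sees_symm⟩

lemma pos_injective : Function.Injective pos := by
  intro a b h
  unfold pos at h
  exact Fin.ext (by exact_mod_cast h)

/-- The apexes carrying the guards. -/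
def guards : Finset (Fin 12) := {0, 4, 6, 10}

/-- The apexes to be guarded; they are seen by the pairs of guards `{4, 10}`, `{0, 4}`, `{4, 6}`,
`{6, 10}`, `{0, 6}` and `{0, 10}`, in this order. -/
def points : Finset (Fin 12) := {2, 3, 5, 7, 8, 11}

lemma ne_of_mem {g p : Fin 12} (hg : g ∈ guards) (hp : p ∈ points) : g ≠ p := by
  have : ∀ g ∈ guards, ∀ p ∈ points, g ≠ p := by decide
  exact this g hg p hp

lemma card_filter_clear : ∀ p ∈ points,
    (guards.filter fun g => Clear (min g p) (max g p)).card = 2 := by decide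

set_option maxRecDepth 10000 in
lemma exists_point_of_pair : ∀ g ∈ guards, ∀ h ∈ guards, g ≠ h →
    ∃ p ∈ points, ∀ k ∈ guards, Clear (min k p) (max k p) → k = g ∨ k = h := by decide

/-- A cover cannot omit two guards, as some point is seen by these two only. -/
lemma three_le_card_of_cover {B : Finset (Fin 12)} (hB : B ⊆ guards)
    (hcov : ∀ p ∈ points, ∃ g ∈ B, Clear (min g p) (max g p)) : 3 ≤ B.card := by
  by_contra! hlt
  have hcard : guards.card = 4 := by decide
  have hmiss : 1 < (guards \ B).card := by
    rw [Finset.card_sdiff_of_subset hB]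
    omega
  obtain ⟨g, hg, h, hh, hne⟩ := Finset.one_lt_card.1 hmiss
  rw [Finset.mem_sdiff] at hg hh
  obtain ⟨p, hp, hpair⟩ := exists_point_of_pair g hg.1 h hh.1 hne
  obtain ⟨k, hk, hkp⟩ := hcov p hp
  rcases hpair k (hB hk) hkp with rfl | rfl
  · exact hg.2 hk
  · exact hh.2 hk

end TerrainGap

open TerrainGap in
/-- The integrality gap of the covering LP for discrete terrain guarding is at
least `3/2`. -/
theorem integrality_gap_three_halves :
    ∃ (f : ℝ → ℝ) (G N : Finset ℝ) (x : ℝ → ℝ),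
      G ∩ N = ∅ ∧
      (∀ g ∈ G, 0 ≤ x g) ∧
      (∀ p ∈ N, 1 ≤ ∑ g ∈ G, if Sees f g p then x g else 0) ∧
      (∃ A ⊆ G, ∀ p ∈ N, ∃ g ∈ A, Sees f g p) ∧
      (∀ A ⊆ G, (∀ p ∈ N, ∃ g ∈ A, Sees f g p) →
        (3 / 2 : ℝ) * ∑ g ∈ G, x g ≤ (A.card : ℝ)) := by
  refine ⟨terrain, guards.image pos, points.image pos, fun _ => 1 / 2, ?_, ?_, ?_, ?_, ?_⟩
  · rw [← Finset.image_inter _ _ pos_injective]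
    have : guards ∩ points = ∅ := by decide
    simp [this]
  · intro g _
    norm_num
  · intro q hq
    obtain ⟨p, hp, rfl⟩ := Finset.mem_image.1 hq
    rw [Finset.sum_image pos_injective.injOn]
    have : ∑ g ∈ guards, (if Sees terrain (pos g) (pos p) then (1 / 2 : ℝ) else 0)
        = ∑ g ∈ guards, if Clear (min g p) (max g p) then (1 / 2 : ℝ) else 0 := by
      refine Finset.sum_congr rfl fun g hg => ?_
      simp only [sees_iff_clear (ne_of_mem hg hp)]
    rw [this, ← Finset.sum_filter, Finset.sum_const, card_filter_clear p hp]
    norm_num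
  · refine ⟨_, subset_rfl, fun q hq => ?_⟩
    obtain ⟨p, hp, rfl⟩ := Finset.mem_image.1 hq
    have hne : (guards.filter fun g => Clear (min g p) (max g p)).Nonempty := by
      rw [← Finset.card_pos, card_filter_clear p hp]
      norm_num
    obtain ⟨g, hg⟩ := hne
    rw [Finset.mem_filter] at hg
    exact ⟨pos g, Finset.mem_image_of_mem _ hg.1, (sees_iff_clear (ne_of_mem hg.1 hp)).2 hg.2⟩
  · intro A hA hcov
    obtain ⟨B, hB, rfl⟩ := Finset.subset_image_iff.1 hA
    have hBG : B ⊆ guards := by exact_mod_cast hB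
    have h3 : 3 ≤ B.card := by
      refine three_le_card_of_cover hBG fun p hp => ?_
      obtain ⟨q, hq, hs⟩ := hcov (pos p) (Finset.mem_image_of_mem _ hp)
      obtain ⟨g, hg, rfl⟩ := Finset.mem_image.1 hq
      exact ⟨g, hg, (sees_iff_clear (ne_of_mem (hBG hg) hp)).1 hs⟩
    rw [Finset.card_image_of_injective _ pos_injective, Finset.sum_const,
      Finset.card_image_of_injective _ pos_injective]
    have h4 : guards.card = 4 := by decide
    rw [h4]
    norm_num
    exact h3
end
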